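/- Let (g_n), n ∈ ℕ, be a sequence of elements of Thompson's group F such that the sequence of marked groups (F,(x₀,x₁,g_n)) is convergent in the space of marked groups, and let G be its limit group, marked by the images x̄₀, x̄₁, ḡ of the three free generators. Then for all nontrivial elements h, h′ ∈ F and every isomorphism ψ from the cyclic subgroup ⟨h⟩ onto the cyclic subgroup ⟨h′⟩ with ψ(h) = h′, there is no group isomorphism φ from G onto the HNN extension H = HNNExtension F ⟨h⟩ ⟨h′⟩ ψ (with stable letter t satisfying t h t⁻¹ = h′) such that φ(x̄₀) and φ(x̄₁) are the canonical images of x₀ and x₁ in H and φ(ḡ) = t. -/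

import Mathlib

/-!
Sequences in `F` modulo eventual equality form the group of germs, and the limit group embeds in it
so that the subgroup generated by `x̄₀, x̄₁` consists of the germs of constant sequences and `ḡ` is
the germ of `(g n)`. If this were an HNN extension, then `g n * h * (g n)⁻¹ = ψ h` for all large
`n`. Fix such an index `n₀` and put `c = g n₀`; then `c⁻¹ * g n` centralizes `h` for all large `n`.
The contradiction comes from a law with a coefficient: for each `h ≠ 1` in `F` there is `a` not
commuting with `h` such that `f a f⁻¹` commutes with `a` for *every* `f` centralizing `h`. Hence
`s a s⁻¹` would commute with `a` for `s = c⁻¹ t`, which Britton's lemma excludes, because `a ∉ ⟨h⟩`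
and `c a c⁻¹ ∉ ⟨ψ h⟩`.

The law is seen in the action of `F` on the line by piecewise linear homeomorphisms whose slopes are
powers of `2`. Let `(-∞, p]` be the largest initial segment fixed by `h`; right of `p`, `h` or `h⁻¹`
is a dilation with factor `r > 1`. An element `f` centralizing `h` fixes `p`, and near `p` it is a
dilation by a power of `2`; conjugating by powers of `h` propagates this, and so for `(u, v)` close
to `p` with `v - p ≤ 2 (u - p)`, `f` fixes `(u, v)` pointwise or moves it off itself. Any nontrivial
`a` supported in `(u, v)` works.

For the presented group, the action must be shown to be faithful. The two relators imply the
infinite presentation `x_k⁻¹ x_n x_k = x_{n+1}`, `k < n`, so every element is `p q⁻¹` with `p` and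
`q` positive, and a positive word with nondecreasing indices can be read off from its action, its
first index `k` being the end of the initial segment that it fixes.
-/

/-- The commutator `[a, b] = a⁻¹ b⁻¹ a b`. -/
def commWord {G : Type*} [Group G] (a b : G) : G := a⁻¹ * b⁻¹ * a * b

/-- The two defining relators of Thompson's group `F`:
`[x₀x₁⁻¹, x₀⁻ⁱx₁x₀ⁱ]` for `i = 1, 2`. -/
def thompsonRels : Set (FreeGroup (Fin 2)) :=
  {r | ∃ i ∈ ({1, 2} : Set ℕ),
    r = commWord (FreeGroup.of 0 * (FreeGroup.of 1)⁻¹)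
        ((FreeGroup.of 0)⁻¹ ^ i * FreeGroup.of 1 * FreeGroup.of 0 ^ i)}

/-- Thompson's group `F`. -/
abbrev ThompsonF : Type := PresentedGroup thompsonRels

/-- The standard generator `x₀` of Thompson's group `F`. -/
def tx0 : ThompsonF := PresentedGroup.of 0

/-- The standard generator `x₁` of Thompson's group `F`. -/
def tx1 : ThompsonF := PresentedGroup.of 1

open Set Filter Topology

section InfinitePresentation

variable {G : Type*} [Group G]

theorem commWord_eq_one_iff_commute {a b : G} : commWord a b = 1 ↔ Commute a b := by
  have h : commWord a b = (b * a)⁻¹ * (a * b) := by simp only [commWord]; group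
  rw [h, inv_mul_eq_one, eq_comm, commute_iff_eq]

theorem map_commWord {H : Type*} [Group H] (φ : G →* H) (a b : G) :
    φ (commWord a b) = commWord (φ a) (φ b) := by
  simp only [commWord, map_mul, map_inv]

theorem semiconjBy_inv_mul_mul (a y : G) : SemiconjBy a (a⁻¹ * y * a) y := by
  rw [SemiconjBy]; group

theorem commute_mul_inv_iff_semiconjBy {a b y : G} :
    Commute (a * b⁻¹) y ↔ SemiconjBy b (a⁻¹ * y * a) y := by
  refine ⟨fun h => ?_, fun h => (semiconjBy_inv_mul_mul a y).mul_left h.inv_symm_left⟩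
  simpa using h.inv_left.semiconjBy.mul_left (semiconjBy_inv_mul_mul a y)

/-- The generators `x₀ = a`, `x_{n+1} = a⁻ⁿ b aⁿ` of the infinite presentation of Thompson's
group, formed from two elements of an arbitrary group. -/
def conjSeq (a b : G) : ℕ → G
  | 0 => a
  | n + 1 => a⁻¹ ^ n * b * a ^ n

@[simp] theorem conjSeq_zero (a b : G) : conjSeq a b 0 = a := rfl

@[simp] theorem conjSeq_one (a b : G) : conjSeq a b 1 = b := by simp [conjSeq]

theorem conjSeq_add_two (a b : G) (n : ℕ) :
    conjSeq a b (n + 2) = a⁻¹ * conjSeq a b (n + 1) * a := by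
  simp only [conjSeq, pow_succ' a⁻¹, pow_succ a, mul_assoc]

theorem map_conjSeq {H : Type*} [Group H] (φ : G →* H) (a b : G) (n : ℕ) :
    φ (conjSeq a b n) = conjSeq (φ a) (φ b) n := by
  cases n <;> simp [conjSeq]

theorem lift_thompsonRel_eq_one_iff (f : Fin 2 → G) (i : ℕ) :
    FreeGroup.lift f (commWord (FreeGroup.of 0 * (FreeGroup.of 1)⁻¹)
        ((FreeGroup.of 0)⁻¹ ^ i * FreeGroup.of 1 * FreeGroup.of 0 ^ i)) = 1 ↔
      SemiconjBy (f 1) (conjSeq (f 0) (f 1) (i + 2)) (conjSeq (f 0) (f 1) (i + 1)) := by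
  rw [map_commWord, commWord_eq_one_iff_commute, conjSeq_add_two,
    ← commute_mul_inv_iff_semiconjBy]
  simp [conjSeq]

variable {X : ℕ → G}

theorem semiconjBy_add_two_of_add_one (h₀ : ∀ n, SemiconjBy (X 0) (X (n + 2)) (X (n + 1)))
    {k n : ℕ} (h : SemiconjBy (X (k + 1)) (X (n + 2)) (X (n + 1))) :
    SemiconjBy (X (k + 2)) (X (n + 3)) (X (n + 2)) := by
  have conj (m : ℕ) : MulAut.conj (X 0)⁻¹ (X (m + 1)) = X (m + 2) := by
    rw [MulAut.conj_apply, inv_inv, mul_assoc, ← (h₀ m).eq, inv_mul_cancel_left]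
  have h' := h.map (MulAut.conj (X 0)⁻¹)
  rwa [conj, conj, conj] at h'

theorem semiconjBy_one_of_semiconjBy_zero
    (h₀ : ∀ n, SemiconjBy (X 0) (X (n + 2)) (X (n + 1)))
    (h₁ : SemiconjBy (X 1) (X 3) (X 2)) (h₂ : SemiconjBy (X 1) (X 4) (X 3)) (n : ℕ) :
    SemiconjBy (X 1) (X (n + 3)) (X (n + 2)) := by
  induction n using Nat.twoStepInduction with
  | zero => exact h₁
  | one => exact h₂
  | more n ih ih' =>
    have h₂' := semiconjBy_add_two_of_add_one h₀ ih
    have h₃' := semiconjBy_add_two_of_add_one h₀ h₂'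
    have conj₂ : (X 2)⁻¹ * X (n + 3) * X 2 = X (n + 4) := by
      rw [mul_assoc, ← h₂'.eq, inv_mul_cancel_left]
    have conj₃ : (X 3)⁻¹ * X (n + 4) * X 3 = X (n + 5) := by
      rw [mul_assoc, ← h₃'.eq, inv_mul_cancel_left]
    -- Conjugation by `X 1` takes `X 3` to `X 2` and `X (n + 4)` to `X (n + 3)`.
    have h := (h₁.inv_right.mul_right ih').mul_right h₁
    rwa [conj₂, conj₃] at h

theorem semiconjBy_of_lt
    (h₀ : ∀ n, SemiconjBy (X 0) (X (n + 2)) (X (n + 1)))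
    (h₁ : SemiconjBy (X 1) (X 3) (X 2)) (h₂ : SemiconjBy (X 1) (X 4) (X 3)) {k n : ℕ}
    (hkn : k < n) : SemiconjBy (X k) (X (n + 1)) (X n) := by
  induction k using Nat.twoStepInduction generalizing n with
  | zero =>
    obtain ⟨m, rfl⟩ := Nat.exists_eq_add_of_lt hkn
    simpa using h₀ m
  | one =>
    obtain ⟨m, rfl⟩ := Nat.exists_eq_add_of_le' hkn
    exact semiconjBy_one_of_semiconjBy_zero h₀ h₁ h₂ m
  | more k _ ih =>
    obtain ⟨m, rfl⟩ := Nat.exists_eq_add_of_le' (show 2 ≤ n by lia)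
    exact semiconjBy_add_two_of_add_one h₀ (ih (by lia))

end InfinitePresentation

section PositiveWords

/-- The generator `x_n` of the infinite presentation `x_k⁻¹ x_n x_k = x_{n+1}`, `k < n`, of
Thompson's group. -/
def genX : ℕ → ThompsonF := conjSeq tx0 tx1

theorem genX_semiconjBy {k n : ℕ} (hkn : k < n) :
    SemiconjBy (genX k) (genX (n + 1)) (genX n) := by
  have rel : ∀ i ∈ ({1, 2} : Set ℕ), SemiconjBy (genX 1) (genX (i + 2)) (genX (i + 1)) := by
    intro i hi
    have hrel := PresentedGroup.one_of_mem (rels := thompsonRels) ⟨i, hi, rfl⟩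
    rw [show PresentedGroup.mk thompsonRels = FreeGroup.lift PresentedGroup.of from
      (FreeGroup.lift.apply_symm_apply _).symm, lift_thompsonRel_eq_one_iff] at hrel
    rw [genX, conjSeq_one]
    exact hrel
  refine semiconjBy_of_lt (fun n => ?_) (rel 1 (by simp)) (rel 2 (by simp)) hkn
  simp only [genX, conjSeq_add_two, conjSeq_zero]
  exact semiconjBy_inv_mul_mul _ _

/-- The positive element `x_{i₁} ⋯ x_{iₘ}` of Thompson's group spelled by a list of indices. -/
def posWord (l : List ℕ) : ThompsonF := (l.map genX).prod

@[simp] theorem posWord_nil : posWord [] = 1 := rfl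

@[simp] theorem posWord_cons (i : ℕ) (l : List ℕ) : posWord (i :: l) = genX i * posWord l := by
  simp [posWord]

theorem posWord_append (p q : List ℕ) : posWord (p ++ q) = posWord p * posWord q := by
  simp [posWord]

theorem exists_genX_inv_mul_posWord (i : ℕ) (l : List ℕ) :
    ∃ p q, (genX i)⁻¹ * posWord l = posWord p * (posWord q)⁻¹ := by
  induction l generalizing i with
  | nil => exact ⟨[], [i], by simp⟩
  | cons k l ih =>
    rcases lt_trichotomy i k with hik | rfl | hki
    · obtain ⟨p, q, h⟩ := ih i
      refine ⟨(k + 1) :: p, q, ?_⟩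
      rw [posWord_cons, posWord_cons, mul_assoc, ← h, ← mul_assoc, ← mul_assoc,
        (genX_semiconjBy hik).inv_symm_left.eq]
    · exact ⟨l, [], by simp⟩
    · obtain ⟨p, q, h⟩ := ih (i + 1)
      refine ⟨k :: p, q, ?_⟩
      rw [posWord_cons, posWord_cons, mul_assoc, ← h, ← mul_assoc, ← mul_assoc,
        (genX_semiconjBy hki).inv_right.eq]

theorem exists_eq_posWord_mul_inv (x : ThompsonF) :
    ∃ p q, x = posWord p * (posWord q)⁻¹ := by
  have gen (i : Fin 2) : ∃ j, (PresentedGroup.of i : ThompsonF) = genX j := by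
    fin_cases i
    · exact ⟨0, rfl⟩
    · exact ⟨1, (conjSeq_one tx0 tx1).symm⟩
  have hx : x ∈ Subgroup.closure (range (PresentedGroup.of (rels := thompsonRels))) :=
    PresentedGroup.closure_range_of thompsonRels ▸ Subgroup.mem_top x
  induction hx using Subgroup.closure_induction_left with
  | one => exact ⟨[], [], by simp⟩
  | mul_left _ hx _ _ ih =>
    obtain ⟨⟨i, rfl⟩, p, q, rfl⟩ := And.intro hx ih
    obtain ⟨j, hj⟩ := gen i
    exact ⟨j :: p, q, by rw [hj, posWord_cons, mul_assoc]⟩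
  | inv_mul_cancel _ hx _ _ ih =>
    obtain ⟨⟨i, rfl⟩, p, q, rfl⟩ := And.intro hx ih
    obtain ⟨j, hj⟩ := gen i
    obtain ⟨p', q', h'⟩ := exists_genX_inv_mul_posWord j p
    exact ⟨p', q ++ q', by rw [hj, ← mul_assoc, h', posWord_append, mul_inv_rev, mul_assoc]⟩

theorem exists_pairwise_le_posWord_cons (i : ℕ) (l : List ℕ) (hl : l.Pairwise (· ≤ ·)) :
    ∃ l', l'.Pairwise (· ≤ ·) ∧ posWord l' = posWord (i :: l) ∧
      ∀ m ≤ i, (∀ j ∈ l, m ≤ j) → ∀ j ∈ l', m ≤ j := by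
  induction l generalizing i with
  | nil => exact ⟨[i], by simp⟩
  | cons k l ih =>
    obtain ⟨hk, hl⟩ := List.pairwise_cons.1 hl
    rcases le_or_gt i k with hik | hki
    · refine ⟨i :: k :: l, ?_, rfl, fun m hmi hm => List.forall_mem_cons.2 ⟨hmi, hm⟩⟩
      simpa [hl, hik] using ⟨fun j hj => hik.trans (hk j hj), hk⟩
    · obtain ⟨l', hsorted, hprod, hbound⟩ := ih (i + 1) hl
      refine ⟨k :: l', List.pairwise_cons.2 ⟨hbound k (by lia) hk, hsorted⟩, ?_, ?_⟩
      · rw [posWord_cons, hprod, posWord_cons, posWord_cons, posWord_cons, ← mul_assoc,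
          ← mul_assoc, (genX_semiconjBy hki).eq]
      · intro m hmi hm
        obtain ⟨hmk, hml⟩ := List.forall_mem_cons.1 hm
        exact List.forall_mem_cons.2 ⟨hmk, hbound m (Nat.le_succ_of_le hmi) hml⟩

theorem exists_pairwise_le_posWord_eq (l : List ℕ) :
    ∃ l', l'.Pairwise (· ≤ ·) ∧ posWord l' = posWord l := by
  induction l with
  | nil => exact ⟨[], List.Pairwise.nil, rfl⟩
  | cons i l ih =>
    obtain ⟨m, hm, heq⟩ := ih
    obtain ⟨l', hl', heq', -⟩ := exists_pairwise_le_posWord_cons i m hm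
    exact ⟨l', hl', by rw [heq', posWord_cons, posWord_cons, heq]⟩

end PositiveWords

section Action

/-- The homeomorphism of the line that is the identity on `(-∞, c]`, has slope `2` on `[c, c + 1]`
and is the translation by `1` on `[c + 1, ∞)`. Its inverse is the action of `x_c` when `c` is a
natural number. -/
noncomputable def bend (c : ℝ) : ℝ ≃o ℝ :=
  StrictMono.orderIsoOfRightInverse
    (fun x => if x ≤ c then x else if x ≤ c + 1 then 2 * x - c else x + 1)
    (by intro x y hxy; dsimp only; split_ifs <;> linarith)
    (fun y => if y ≤ c then y else if y ≤ c + 2 then (y + c) / 2 else y - 1)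
    (by intro y; dsimp only; split_ifs <;> linarith)

theorem bend_apply (c x : ℝ) :
    bend c x = if x ≤ c then x else if x ≤ c + 1 then 2 * x - c else x + 1 := rfl

theorem bend_inv_apply (c y : ℝ) :
    (bend c)⁻¹ y = if y ≤ c then y else if y ≤ c + 2 then (y + c) / 2 else y - 1 := rfl

theorem bend_semiconjBy {c d : ℝ} (h : c + 1 ≤ d) :
    SemiconjBy (bend c) (bend d) (bend (d + 1)) := by
  ext x
  simp only [RelIso.mul_apply, bend_apply]
  split_ifs <;> linarith

theorem bend_inv_apply_of_le {c x : ℝ} (h : x ≤ c) : (bend c)⁻¹ x = x := by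
  rw [bend_inv_apply, if_pos h]

theorem bend_inv_apply_lt {c x : ℝ} (h : c < x) : (bend c)⁻¹ x < x := by
  rw [bend_inv_apply]; split_ifs <;> linarith

theorem bend_inv_apply_le (c x : ℝ) : (bend c)⁻¹ x ≤ x := by
  rcases le_or_gt x c with h | h
  · exact (bend_inv_apply_of_le h).le
  · exact (bend_inv_apply_lt h).le

theorem conjSeq_bend_inv (n : ℕ) :
    conjSeq (bend (0 : ℕ))⁻¹ (bend (1 : ℕ))⁻¹ n = (bend n)⁻¹ := by
  induction n using Nat.twoStepInduction with
  | zero => rfl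
  | one => exact conjSeq_one _ _
  | more n _ ih =>
    have h : SemiconjBy (bend (0 : ℕ)) (bend (n + 1 : ℕ))⁻¹ (bend (n + 2 : ℕ))⁻¹ := by
      have h := (bend_semiconjBy (c := (0 : ℕ)) (d := (n + 1 : ℕ)) (by simp)).inv_right
      rwa [← Nat.cast_add_one] at h
    rw [conjSeq_add_two, ih, inv_inv, h.eq, mul_inv_cancel_right]

theorem lift_bend_inv_eq_one (r : FreeGroup (Fin 2)) (hr : r ∈ thompsonRels) :
    FreeGroup.lift (fun i : Fin 2 => (bend (i : ℕ))⁻¹) r = 1 := by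
  obtain ⟨i, hi, rfl⟩ := hr
  have hi1 : 1 ≤ i := by
    rcases hi with rfl | rfl <;> norm_num
  refine (lift_thompsonRel_eq_one_iff _ i).2 ?_
  have h := (bend_semiconjBy (c := (1 : ℕ)) (d := (i + 1 : ℕ))
    (by exact_mod_cast Nat.succ_le_succ hi1)).inv_symm_left.inv_right
  rw [← Nat.cast_add_one] at h
  simp only [Fin.val_zero, Fin.val_one, conjSeq_bend_inv]
  exact h

/-- The action of Thompson's group on the line in which `x_n` acts as `(bend n)⁻¹`. -/
noncomputable def rep : ThompsonF →* (ℝ ≃o ℝ) := PresentedGroup.toGroup lift_bend_inv_eq_one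

theorem rep_genX (n : ℕ) : rep (genX n) = (bend n)⁻¹ := by
  rw [← conjSeq_bend_inv, genX, map_conjSeq]
  simp [rep, tx0, tx1]

theorem rep_posWord_cons_apply (k : ℕ) (l : List ℕ) (x : ℝ) :
    rep (posWord (k :: l)) x = (bend k)⁻¹ (rep (posWord l) x) := by
  rw [posWord_cons, map_mul, RelIso.mul_apply, rep_genX]

theorem rep_posWord_apply_le (l : List ℕ) (x : ℝ) : rep (posWord l) x ≤ x := by
  induction l with
  | nil => simp
  | cons k l ih => exact (rep_posWord_cons_apply k l x).trans_le ((bend_inv_apply_le _ _).trans ih)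

theorem rep_posWord_apply_of_forall_le {l : List ℕ} {x : ℝ} (h : ∀ j ∈ l, x ≤ (j : ℝ)) :
    rep (posWord l) x = x := by
  induction l with
  | nil => simp
  | cons k l ih =>
    obtain ⟨hk, hl⟩ := List.forall_mem_cons.1 h
    rw [rep_posWord_cons_apply, ih hl, bend_inv_apply_of_le hk]

theorem rep_posWord_cons_apply_eq_iff {k : ℕ} {l : List ℕ} (hkl : (k :: l).Pairwise (· ≤ ·))
    {x : ℝ} : rep (posWord (k :: l)) x = x ↔ x ≤ k := by
  have hk : ∀ j ∈ l, (k : ℝ) ≤ j := fun j hj => Nat.cast_le.2 (List.rel_of_pairwise_cons hkl hj)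
  refine ⟨fun hx => ?_, fun hx => rep_posWord_apply_of_forall_le <|
    List.forall_mem_cons.2 ⟨hx, fun j hj => hx.trans (hk j hj)⟩⟩
  contrapose! hx
  have hlt : (k : ℝ) < rep (posWord l) x := by
    have h := (rep (posWord l)).strictMono hx
    rwa [rep_posWord_apply_of_forall_le hk] at h
  rw [rep_posWord_cons_apply]
  exact ((bend_inv_apply_lt hlt).trans_le (rep_posWord_apply_le l x)).ne

theorem eq_of_rep_posWord_eq {p q : List ℕ} (hp : p.Pairwise (· ≤ ·)) (hq : q.Pairwise (· ≤ ·))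
    (h : rep (posWord p) = rep (posWord q)) : p = q := by
  have ne_nil {k : ℕ} {l : List ℕ} (hkl : (k :: l).Pairwise (· ≤ ·)) :
      rep (posWord (k :: l)) ≠ rep (posWord []) := by
    intro h
    have hk := (rep_posWord_cons_apply_eq_iff hkl (x := k + 1)).1 (by rw [h]; simp)
    exact (lt_add_one (k : ℝ)).not_ge hk
  induction p generalizing q with
  | nil => cases q with
    | nil => rfl
    | cons k' q => exact absurd h.symm (ne_nil hq)
  | cons k p ih => cases q with
    | nil => exact absurd h (ne_nil hp)
    | cons k' q =>
      have hle (x : ℝ) : x ≤ k ↔ x ≤ k' := by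
        rw [← rep_posWord_cons_apply_eq_iff hp, h, rep_posWord_cons_apply_eq_iff hq]
      obtain rfl : k = k' := Nat.cast_injective (eq_of_forall_le_iff hle)
      rw [posWord_cons, posWord_cons, map_mul, map_mul, mul_right_inj] at h
      rw [ih hp.of_cons hq.of_cons h]

theorem rep_injective : Function.Injective rep := by
  refine (injective_iff_map_eq_one rep).2 fun x hx => ?_
  obtain ⟨p, q, rfl⟩ := exists_eq_posWord_mul_inv x
  obtain ⟨p', hp', hpp'⟩ := exists_pairwise_le_posWord_eq p
  obtain ⟨q', hq', hqq'⟩ := exists_pairwise_le_posWord_eq q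
  rw [← hpp', ← hqq', map_mul, map_inv, mul_inv_eq_one] at hx
  rw [← hpp', ← hqq', eq_of_rep_posWord_eq hp' hq' hx, mul_inv_cancel]

end Action

section Support

variable {α : Type*} [Preorder α]

/-- The order automorphism `σ` is supported in `s`: it fixes every point outside `s`. -/
def SupportedIn (σ : α ≃o α) (s : Set α) : Prop := ∀ x ∉ s, σ x = x

namespace SupportedIn

variable {σ τ : α ≃o α} {s t : Set α}

theorem mono (h : SupportedIn σ s) (hst : s ⊆ t) : SupportedIn σ t :=
  fun x hx => h x fun hxs => hx (hst hxs)

theorem conj (h : SupportedIn σ s) (f : α ≃o α) : SupportedIn (f * σ * f⁻¹) (f '' s) := by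
  intro x hx
  rw [RelIso.mul_apply, RelIso.mul_apply, h, RelIso.apply_inv_self]
  exact fun hs => hx ⟨f⁻¹ x, hs, RelIso.apply_inv_self f x⟩

theorem commute_of_disjoint (hσ : SupportedIn σ s) (hτ : SupportedIn τ t) (hst : Disjoint s t) :
    Commute σ τ := by
  have h : Equiv.Perm.Disjoint σ.toEquiv τ.toEquiv := fun x => by
    by_cases hx : x ∈ s
    · exact .inr (hτ x (disjoint_left.1 hst hx))
    · exact .inl (hσ x hx)
  exact RelIso.toEquiv_injective h.commute.eq

theorem eq_one_of_disjoint (hσ : SupportedIn σ s) (hσ' : SupportedIn σ t) (hst : Disjoint s t) :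
    σ = 1 := by
  ext x
  by_cases hx : x ∈ s
  · exact hσ' x (disjoint_left.1 hst hx)
  · exact hσ x hx

theorem mapsTo (h : SupportedIn σ s) : MapsTo σ s s := fun x hx => by
  by_contra hσx
  exact hσx ((σ.injective (h (σ x) hσx)).symm ▸ hx)

end SupportedIn

end Support

section InitialSegments

theorem exists_isGreatest_eqOn_Iic {α β : Type*} [ConditionallyCompleteLinearOrder α]
    [TopologicalSpace α] [OrderTopology α] [DenselyOrdered α] [NoMinOrder α]
    [TopologicalSpace β] [T2Space β] {f g : α → β} (hf : Continuous f) (hg : Continuous g)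
    (hne : f ≠ g) {c : α} (hc : EqOn f g (Iic c)) :
    ∃ p, IsGreatest {x | EqOn f g (Iic x)} p := by
  obtain ⟨z, hz⟩ := Function.ne_iff.1 hne
  have hbdd : BddAbove {x | EqOn f g (Iic x)} :=
    ⟨z, fun x hx => le_of_not_ge fun hzx => hz (hx hzx)⟩
  refine ⟨sSup {x | EqOn f g (Iic x)}, ?_, fun x hx => le_csSup hbdd hx⟩
  have hlt : EqOn f g (Iio (sSup {x | EqOn f g (Iic x)})) := fun y hy => by
    obtain ⟨x, hx, hyx⟩ := exists_lt_of_lt_csSup ⟨c, hc⟩ hy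
    exact hx hyx.le
  have h := hlt.closure hf hg
  rwa [closure_Iio] at h

theorem apply_le_of_commute {α : Type*} [Preorder α] {σ f : α ≃o α} {p : α}
    (hp : IsGreatest {x | EqOn σ id (Iic x)} p) (hf : Commute f σ) : f p ≤ p := by
  refine hp.2 fun y hy => ?_
  have hσ : σ (f⁻¹ y) = f⁻¹ y := hp.1 (by
    rw [mem_Iic, ← f.le_iff_le, RelIso.apply_inv_self]; exact hy)
  calc σ y = (σ * f) (f⁻¹ y) := by rw [RelIso.mul_apply, RelIso.apply_inv_self]
    _ = (f * σ) (f⁻¹ y) := by rw [hf.eq]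
    _ = y := by rw [RelIso.mul_apply, hσ, RelIso.apply_inv_self]

theorem apply_eq_of_commute {α : Type*} [PartialOrder α] {σ f : α ≃o α} {p : α}
    (hp : IsGreatest {x | EqOn σ id (Iic x)} p) (hf : Commute f σ) : f p = p := by
  refine (apply_le_of_commute hp hf).antisymm ?_
  have h := f.monotone (apply_le_of_commute hp hf.inv_left)
  rwa [RelIso.apply_inv_self] at h

end InitialSegments

section Slopes

/-- `σ` is affine with slope `s` on some nondegenerate interval `[x, x + ε]`. -/
def HasRightSlope (σ : ℝ ≃o ℝ) (x s : ℝ) : Prop := ∀ᶠ y in 𝓝[≥] x, σ y = σ x + s * (y - x)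

theorem tendsto_orderIso_nhdsGE {α β : Type*} [PartialOrder α] [TopologicalSpace α]
    [OrderTopology α] [PartialOrder β] [TopologicalSpace β] [OrderTopology β] (σ : α ≃o β) (x : α) :
    Tendsto σ (𝓝[≥] x) (𝓝[≥] (σ x)) :=
  σ.continuous.continuousWithinAt.tendsto_nhdsWithin σ.monotone.mapsTo_Ici

namespace HasRightSlope

variable {σ τ : ℝ ≃o ℝ} {x s r : ℝ}

theorem mul (hσ : HasRightSlope σ (τ x) s) (hτ : HasRightSlope τ x r) :
    HasRightSlope (σ * τ) x (s * r) := by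
  filter_upwards [hτ, (tendsto_orderIso_nhdsGE τ x).eventually hσ] with y hτy hσy
  rw [RelIso.mul_apply, RelIso.mul_apply, hσy, hτy]
  ring

theorem inv (hσ : HasRightSlope σ (σ⁻¹ x) s) (hs : s ≠ 0) : HasRightSlope σ⁻¹ x s⁻¹ := by
  filter_upwards [(tendsto_orderIso_nhdsGE σ⁻¹ x).eventually hσ] with y hy
  rw [RelIso.apply_inv_self, RelIso.apply_inv_self] at hy
  have hsub : y - x = s * (σ⁻¹ y - σ⁻¹ x) := sub_eq_iff_eq_add'.2 hy
  rw [hsub, inv_mul_cancel_left₀ hs, add_sub_cancel]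

end HasRightSlope

/-- The increasing homeomorphisms of the line that are, to the right of each point, locally
affine with slope a power of `2`. -/
def dyadicSlopes : Subgroup (ℝ ≃o ℝ) where
  carrier := {σ | ∀ x, ∃ i : ℤ, HasRightSlope σ x (2 ^ i)}
  one_mem' x := ⟨0, by simp [HasRightSlope]⟩
  mul_mem' {σ τ} hσ hτ x := by
    obtain ⟨i, hi⟩ := hσ (τ x)
    obtain ⟨j, hj⟩ := hτ x
    exact ⟨i + j, zpow_add₀ (two_ne_zero (α := ℝ)) i j ▸ hi.mul hj⟩
  inv_mem' {σ} hσ x := by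
    obtain ⟨i, hi⟩ := hσ (σ⁻¹ x)
    exact ⟨-i, zpow_neg (2 : ℝ) i ▸ hi.inv (by positivity)⟩

theorem bend_mem_dyadicSlopes (c : ℝ) : bend c ∈ dyadicSlopes := by
  intro x
  rcases lt_or_ge x c with hx | hx
  · refine ⟨0, ?_⟩
    filter_upwards [Icc_mem_nhdsGE hx] with y hy
    rw [bend_apply, bend_apply, if_pos hy.2, if_pos hx.le]
    ring
  rcases lt_or_ge x (c + 1) with hx' | hx'
  · refine ⟨1, ?_⟩
    filter_upwards [Icc_mem_nhdsGE hx'] with y hy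
    obtain ⟨hxy, hy⟩ := hy
    rw [bend_apply, bend_apply, zpow_one]
    split_ifs <;> linarith
  · refine ⟨0, ?_⟩
    filter_upwards [self_mem_nhdsWithin] with y (hxy : x ≤ y)
    rw [bend_apply, bend_apply, zpow_zero]
    split_ifs <;> linarith

theorem rep_mem_dyadicSlopes (x : ThompsonF) : rep x ∈ dyadicSlopes := by
  refine PresentedGroup.generated_by thompsonRels (dyadicSlopes.comap rep) (fun i => ?_) x
  simpa [rep] using inv_mem (bend_mem_dyadicSlopes i)

theorem rep_apply_of_nonpos (g : ThompsonF) {x : ℝ} (hx : x ≤ 0) : rep g x = x := by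
  obtain ⟨p, q, rfl⟩ := exists_eq_posWord_mul_inv g
  have fixes (l : List ℕ) : rep (posWord l) x = x :=
    rep_posWord_apply_of_forall_le fun j _ => hx.trans j.cast_nonneg
  rw [map_mul, map_inv, RelIso.mul_apply]
  conv_lhs => rw [← fixes q, RelIso.inv_apply_self, fixes p]

theorem exists_one_lt_hasRightSlope {σ : ℝ ≃o ℝ} (hσ : σ ∈ dyadicSlopes) {p : ℝ}
    (hp : IsGreatest {x | EqOn σ id (Iic x)} p) :
    ∃ r, 1 < r ∧ (HasRightSlope σ p r ∨ HasRightSlope σ⁻¹ p r) := by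
  have hfix : σ p = p := hp.1 self_mem_Iic
  obtain ⟨i, hi⟩ := hσ p
  rcases lt_trichotomy i 0 with hneg | rfl | hpos
  · have hfix' : σ⁻¹ p = p := by conv_lhs => rw [← hfix, RelIso.inv_apply_self]
    exact ⟨(2 ^ i)⁻¹, (one_lt_inv₀ (by positivity)).2 (zpow_lt_one_of_neg₀ one_lt_two hneg),
      .inr (HasRightSlope.inv (hfix'.symm ▸ hi) (by positivity))⟩
  · obtain ⟨q, hpq, hq⟩ := mem_nhdsGE_iff_exists_Icc_subset.1 hi
    have hfixq : EqOn σ id (Iic q) := fun y hy => by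
      rcases le_total y p with hyp | hpy
      · exact hp.1 hyp
      · simpa [hfix] using hq ⟨hpy, hy⟩
    exact absurd (hp.2 hfixq) hpq.not_ge
  · exact ⟨2 ^ i, one_lt_zpow₀ one_lt_two hpos, .inl hi⟩

end Slopes

section Centralizers

variable {σ f : ℝ ≃o ℝ} {p q r s y z : ℝ}

theorem pow_apply_of_dilation (hr : 1 < r) (hσ : ∀ y ∈ Icc p q, σ y = p + r * (y - p)) (n : ℕ)
    (hy : y ∈ Icc p q) : (σ ^ n) (p + (y - p) / r ^ n) = y := by
  have hr0 : 0 < r := zero_lt_one.trans hr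
  induction n with
  | zero => simp
  | succ n ih =>
    have hle : (y - p) / r ^ (n + 1) ≤ y - p :=
      div_le_self (sub_nonneg.2 hy.1) (one_le_pow₀ hr.le)
    have hnonneg : 0 ≤ (y - p) / r ^ (n + 1) :=
      div_nonneg (sub_nonneg.2 hy.1) (pow_pos hr0 _).le
    have hstep : r * ((y - p) / r ^ (n + 1)) = (y - p) / r ^ n := by
      field_simp
      ring
    rw [pow_succ, RelIso.mul_apply, hσ _ ⟨by linarith, by linarith [hy.2]⟩, add_sub_cancel_left,
      hstep, ih]

/-- Zooming in at `p` with `σ` replaces `f` by its germ at `p`. -/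
theorem exists_apply_eq_pow_apply (hr : 1 < r) (hσ : ∀ y ∈ Icc p q, σ y = p + r * (y - p))
    (hfp : f p = p) (hf : HasRightSlope f p s) (hc : Commute f σ) (hy : y ∈ Icc p q) :
    ∃ n : ℕ, f y = (σ ^ n) (p + s * ((y - p) / r ^ n)) := by
  have hlim : Tendsto (fun n : ℕ => p + (y - p) / r ^ n) atTop (𝓝[≥] p) := by
    refine tendsto_nhdsWithin_iff.2 ⟨?_, .of_forall fun n => ?_⟩
    · simpa using (tendsto_const_nhds (x := y - p)).div_atTop
        (tendsto_pow_atTop_atTop_of_one_lt hr) |>.const_add p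
    · have : 0 ≤ (y - p) / r ^ n := div_nonneg (sub_nonneg.2 hy.1) (by positivity)
      exact le_add_of_nonneg_right this
  obtain ⟨n, hn⟩ := (hlim.eventually hf).exists
  rw [hfp, add_sub_cancel_left] at hn
  refine ⟨n, ?_⟩
  calc f y = (f * σ ^ n) (p + (y - p) / r ^ n) := by
        rw [RelIso.mul_apply, pow_apply_of_dilation hr hσ n hy]
    _ = (σ ^ n) (p + s * ((y - p) / r ^ n)) := by
        rw [(hc.pow_right n).eq, RelIso.mul_apply, hn]

theorem apply_le_iff_of_commute_dilation (hr : 1 < r)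
    (hσ : ∀ y ∈ Icc p q, σ y = p + r * (y - p)) (hfp : f p = p) (hf : HasRightSlope f p s)
    (hc : Commute f σ) (hy : y ∈ Icc p q) (hz : z ∈ Icc p q) :
    f y ≤ z ↔ s * (y - p) ≤ z - p := by
  obtain ⟨n, hn⟩ := exists_apply_eq_pow_apply hr hσ hfp hf hc hy
  conv_lhs => rw [hn, ← pow_apply_of_dilation hr hσ n hz, OrderIso.le_iff_le, add_le_add_iff_left,
    ← mul_div_assoc, div_le_div_iff_of_pos_right (by positivity)]

theorem le_apply_iff_of_commute_dilation (hr : 1 < r)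
    (hσ : ∀ y ∈ Icc p q, σ y = p + r * (y - p)) (hfp : f p = p) (hf : HasRightSlope f p s)
    (hc : Commute f σ) (hy : y ∈ Icc p q) (hz : z ∈ Icc p q) :
    z ≤ f y ↔ z - p ≤ s * (y - p) := by
  obtain ⟨n, hn⟩ := exists_apply_eq_pow_apply hr hσ hfp hf hc hy
  conv_lhs => rw [hn, ← pow_apply_of_dilation hr hσ n hz, OrderIso.le_iff_le, add_le_add_iff_left,
    ← mul_div_assoc, div_le_div_iff_of_pos_right (by positivity)]

/-- The slope of `f` at `p` is `1`, at least `2` or at most `1 / 2`, and the condition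
`v - p ≤ 2 * (u - p)` makes a dilation by a factor `2` at `p` move `(u, v)` off itself. -/
theorem supportedIn_compl_or_disjoint_image (hr : 1 < r)
    (hσ : ∀ y ∈ Icc p q, σ y = p + r * (y - p)) (hfp : f p = p) (hf : f ∈ dyadicSlopes)
    (hc : Commute f σ) {u v : ℝ} (hu : u ∈ Icc p q) (hv : v ∈ Icc p q)
    (huv : v - p ≤ 2 * (u - p)) :
    SupportedIn f (Ioo u v)ᶜ ∨ Disjoint (f '' Ioo u v) (Ioo u v) := by
  obtain ⟨m, hm⟩ := hf p
  rw [OrderIso.image_Ioo]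
  rcases lt_trichotomy m 0 with hneg | rfl | hpos
  · have hslope : (2 : ℝ) ^ m ≤ 2⁻¹ := by
      rw [← zpow_neg_one]; exact zpow_le_zpow_right₀ one_le_two (by lia)
    have hfv : f v ≤ u := (apply_le_iff_of_commute_dilation hr hσ hfp hm hc hv hu).2 (by
      nlinarith [hv.1])
    exact .inr (Ioo_disjoint_Ioo.2 ((min_le_left _ _).trans (hfv.trans (le_max_right _ _))))
  · left
    intro y hy
    obtain ⟨huy, hyv⟩ := notMem_compl_iff.1 hy
    have hy : y ∈ Icc p q := ⟨hu.1.trans huy.le, hyv.le.trans hv.2⟩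
    exact le_antisymm ((apply_le_iff_of_commute_dilation hr hσ hfp hm hc hy hy).2 (by simp))
      ((le_apply_iff_of_commute_dilation hr hσ hfp hm hc hy hy).2 (by simp))
  · have hslope : (2 : ℝ) ≤ 2 ^ m := by
      conv_lhs => rw [← zpow_one (2 : ℝ)]
      exact zpow_le_zpow_right₀ one_le_two (by lia)
    have hfu : v ≤ f u := (le_apply_iff_of_commute_dilation hr hσ hfp hm hc hu hv).2 (by
      nlinarith [hu.1])
    exact .inr (Ioo_disjoint_Ioo.2 ((min_le_right _ _).trans (hfu.trans (le_max_left _ _))))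

theorem exists_Ioo_supportedIn_compl_or_disjoint_image (hσ : σ ∈ dyadicSlopes) (h1 : σ ≠ 1)
    {c : ℝ} (hc : EqOn σ id (Iic c)) :
    ∃ u v, c ≤ u ∧ u < v ∧ ∀ f ∈ dyadicSlopes, Commute f σ →
      SupportedIn f (Ioo u v)ᶜ ∨ Disjoint (f '' Ioo u v) (Ioo u v) := by
  obtain ⟨p, hp⟩ := exists_isGreatest_eqOn_Iic σ.continuous continuous_id
    (fun h => h1 (DFunLike.coe_injective h)) hc
  have hcp : c ≤ p := hp.2 hc
  obtain ⟨r, hr, τ, hτ, hτp, hcomm⟩ : ∃ r, 1 < r ∧ ∃ τ, HasRightSlope τ p r ∧ τ p = p ∧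
      ∀ f, Commute f σ → Commute f τ := by
    have hfix : σ p = p := hp.1 self_mem_Iic
    obtain ⟨r, hr, hslope | hslope⟩ := exists_one_lt_hasRightSlope hσ hp
    · exact ⟨r, hr, σ, hslope, hfix, fun f hf => hf⟩
    · refine ⟨r, hr, σ⁻¹, hslope, ?_, fun f hf => hf.inv_right⟩
      conv_lhs => rw [← hfix, RelIso.inv_apply_self]
  obtain ⟨q, hpq, hq⟩ := mem_nhdsGE_iff_exists_Icc_subset.1 hτ
  have hdil : ∀ y ∈ Icc p q, τ y = p + r * (y - p) := fun y hy => by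
    rw [hq hy, hτp]
  replace hpq : p < q := hpq
  refine ⟨(p + q) / 2, q, by linarith, by linarith, fun f hf hfσ => ?_⟩
  exact supportedIn_compl_or_disjoint_image hr hdil (apply_eq_of_commute hp hfσ) hf (hcomm f hfσ)
    ⟨by linarith, by linarith⟩ ⟨hpq.le, le_rfl⟩ (by linarith)

end Centralizers

section SmallSupport

theorem bend_inv_pow_apply {c x : ℝ} (hx : 0 ≤ x) (hx2 : x ≤ 2) (n : ℕ) :
    ((bend c)⁻¹ ^ n) (c + x) = c + x / 2 ^ n := by
  induction n with
  | zero => simp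
  | succ n ih =>
    have hle : x / 2 ^ n ≤ x := div_le_self hx (one_le_pow₀ one_le_two)
    have hnonneg : 0 ≤ x / 2 ^ n := by positivity
    rw [pow_succ', RelIso.mul_apply, ih, bend_inv_apply, pow_succ, ← div_div]
    split_ifs <;> linarith

theorem supportedIn_bend_inv_mul_bend (c : ℝ) :
    SupportedIn ((bend c)⁻¹ * bend (c + 1)) (Ioo c (c + 2)) := by
  intro x hx
  rw [mem_Ioo, not_and_or, not_lt, not_lt] at hx
  rw [RelIso.mul_apply, bend_apply, bend_inv_apply]
  split_ifs <;> rcases hx with hx | hx <;> linarith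

theorem bend_inv_mul_bend_ne_one (c : ℝ) : (bend c)⁻¹ * bend (c + 1) ≠ 1 := fun h => by
  have hfix : (bend c)⁻¹ (bend (c + 1) (c + 1)) = c + 1 := DFunLike.congr_fun h (c + 1)
  rw [bend_apply, if_pos le_rfl] at hfix
  exact (bend_inv_apply_lt (lt_add_one c)).ne hfix

theorem rep_genX_mul_genX_inv (k : ℕ) :
    rep (genX k * (genX (k + 1))⁻¹) = (bend k)⁻¹ * bend (k + 1) := by
  rw [map_mul, map_inv, rep_genX, rep_genX, inv_inv, Nat.cast_add_one]

theorem exists_rep_apply_mem_Ioo (n : ℕ) {u v : ℝ} (hu : 0 ≤ u) (huv : 1 < (v - u) * 2 ^ n) :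
    ∃ (g : ThompsonF) (k : ℕ), rep g k ∈ Ioo u v := by
  induction n generalizing u v with
  | zero =>
    refine ⟨1, ⌊u⌋₊ + 1, ?_⟩
    rw [map_one, RelIso.one_apply, Nat.cast_add_one]
    exact ⟨Nat.lt_floor_add_one u, by linarith [Nat.floor_le hu]⟩
  | succ n ih =>
    have hju : (⌊u⌋₊ : ℝ) ≤ u := Nat.floor_le hu
    have huj : u < ⌊u⌋₊ + 1 := Nat.lt_floor_add_one u
    rcases lt_or_ge (⌊u⌋₊ + 1 : ℝ) v with hjv | hvj
    · refine ⟨1, ⌊u⌋₊ + 1, ?_⟩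
      rw [map_one, RelIso.one_apply, Nat.cast_add_one]
      exact ⟨huj, hjv⟩
    -- Both endpoints lie in `[j, j + 1]` with `j = ⌊u⌋`, where `bend j` doubles lengths.
    have hlt : u < v := by
      rw [← sub_pos]; exact pos_of_mul_pos_left (zero_lt_one.trans huv) (by positivity)
    have bend_eq {x : ℝ} (hx : ⌊u⌋₊ ≤ x) (hx' : x ≤ ⌊u⌋₊ + 1) : bend ⌊u⌋₊ x = 2 * x - ⌊u⌋₊ := by
      rw [bend_apply]; split_ifs <;> linarith
    have hbu := bend_eq hju huj.le
    have hbv := bend_eq (hju.trans hlt.le) hvj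
    obtain ⟨g, k, hgu, hgv⟩ := ih (u := bend ⌊u⌋₊ u) (v := bend ⌊u⌋₊ v)
      (by linarith) (by rw [hbu, hbv]; rw [pow_succ] at huv; linarith)
    refine ⟨genX ⌊u⌋₊ * g, k, ?_⟩
    rw [map_mul, rep_genX, RelIso.mul_apply]
    exact ⟨(bend ⌊u⌋₊).lt_symm_apply.2 hgu, (bend ⌊u⌋₊).symm_apply_lt.2 hgv⟩

theorem exists_ne_one_supportedIn_Ioo {u v : ℝ} (hu : 0 ≤ u) (huv : u < v) :
    ∃ a : ThompsonF, a ≠ 1 ∧ SupportedIn (rep a) (Ioo u v) := by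
  obtain ⟨n, hn⟩ := pow_unbounded_of_one_lt (v - u)⁻¹ (one_lt_two (α := ℝ))
  obtain ⟨g, k, hgu, hgv⟩ := exists_rep_apply_mem_Ioo n hu
    ((inv_lt_iff_one_lt_mul₀' (sub_pos.2 huv)).1 hn)
  have hk : (k : ℝ) < (rep g)⁻¹ v := (rep g).lt_symm_apply.2 hgv
  obtain ⟨m, hm⟩ := pow_unbounded_of_one_lt (2 / ((rep g)⁻¹ v - k)) (one_lt_two (α := ℝ))
  -- `x_k ^ m` shrinks the support `(k, k + 2)` of `x_k x_{k+1}⁻¹` towards `k`, then `g` moves it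
  -- into `(u, v)`.
  set b := genX k * (genX (k + 1))⁻¹
  set f := g * genX k ^ m
  have hb : b ≠ 1 := fun h => bend_inv_mul_bend_ne_one k <| by
    rw [← rep_genX_mul_genX_inv]; exact (congrArg rep h).trans (map_one rep)
  have hsupp : SupportedIn (rep b) (Ioo k (k + 2)) :=
    rep_genX_mul_genX_inv k ▸ supportedIn_bend_inv_mul_bend k
  have hf {x : ℝ} (hx : 0 ≤ x) (hx2 : x ≤ 2) : rep f (k + x) = rep g (k + x / 2 ^ m) := by
    rw [map_mul, map_pow, rep_genX, RelIso.mul_apply, bend_inv_pow_apply hx hx2]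
  have hfk : u ≤ rep f k := by
    have h := hf le_rfl zero_le_two
    rw [zero_div, add_zero] at h
    exact h ▸ hgu.le
  have hfk2 : rep f (k + 2) ≤ v := by
    have h : 2 / 2 ^ m < (rep g)⁻¹ v - k := (div_lt_comm₀ (sub_pos.2 hk) (by positivity)).1 hm
    rw [hf zero_le_two le_rfl]
    exact ((rep g).lt_symm_apply.1 (lt_sub_iff_add_lt'.1 h)).le
  refine ⟨f * b * f⁻¹, mt conj_eq_one_iff.1 hb, ?_⟩
  rw [map_mul, map_mul, map_inv]
  refine (hsupp.conj (rep f)).mono ?_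
  rw [OrderIso.image_Ioo]
  exact Ioo_subset_Ioo hfk hfk2

end SmallSupport

section Law

theorem exists_not_commute_and_forall_commute_conj {h : ThompsonF} (hh : h ≠ 1) :
    ∃ a, ¬ Commute a h ∧ ∀ f, Commute f h → Commute (f * a * f⁻¹) a := by
  obtain ⟨u, v, hu, huv, dichotomy⟩ := exists_Ioo_supportedIn_compl_or_disjoint_image
    (rep_mem_dyadicSlopes h) ((map_ne_one_iff rep rep_injective).2 hh)
    (fun _ hx => rep_apply_of_nonpos h hx)
  obtain ⟨a, ha, hsupp⟩ := exists_ne_one_supportedIn_Ioo hu huv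
  refine ⟨a, fun hah => ?_, fun f hf => Commute.of_map rep_injective ?_⟩
  · rcases dichotomy _ (rep_mem_dyadicSlopes a) (hah.map rep) with hfix | hdisj
    · exact ha ((map_eq_one_iff rep rep_injective).1
        (hsupp.eq_one_of_disjoint hfix disjoint_compl_right))
    · obtain ⟨y, hy⟩ := nonempty_Ioo.2 huv
      exact disjoint_left.1 hdisj (mem_image_of_mem _ hy) (hsupp.mapsTo hy)
  · rw [map_mul, map_mul, map_inv]
    rcases dichotomy _ (rep_mem_dyadicSlopes f) (hf.map rep) with hfix | hdisj
    · rw [(hfix.commute_of_disjoint hsupp disjoint_compl_left).eq, mul_inv_cancel_right]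
    · exact (hsupp.conj _).commute_of_disjoint hsupp hdisj

end Law

section HNNExtension

variable {G : Type*} [Group G] {A B : Subgroup G}

theorem not_commute_conj_inv_mul_t (ψ : A ≃* B) {a c : G} (ha : a ∉ A) (hc : c * a * c⁻¹ ∉ B) :
    ¬ Commute ((HNNExtension.of c⁻¹ * HNNExtension.t) * HNNExtension.of a *
        (HNNExtension.of c⁻¹ * HNNExtension.t)⁻¹ : HNNExtension G A B ψ) (HNNExtension.of a) := by
  intro hcomm
  -- The commutator is `c⁻¹ t a t⁻¹ (c a c⁻¹) t a⁻¹ t⁻¹ (c a⁻¹)`, which is reduced.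
  let w : HNNExtension.NormalWord.ReducedWord G A B :=
    { head := c⁻¹
      toList := [(1, a), (-1, c * a * c⁻¹), (1, a⁻¹), (-1, c * a⁻¹)]
      chain := by
        simp only [List.isChain_cons_cons, List.isChain_singleton, and_true,
          HNNExtension.toSubgroup_one, HNNExtension.toSubgroup_neg_one, inv_mem_iff]
        exact ⟨fun h => absurd h ha, fun h => absurd h hc, fun h => absurd h ha⟩ }
  have hw : w.prod ψ = 1 := by
    rw [← mul_inv_eq_one.2 hcomm.eq]
    simp [w, HNNExtension.NormalWord.ReducedWord.prod, mul_assoc]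
  have hnil := HNNExtension.ReducedWord.toList_eq_nil_of_mem_of_range ψ w (hw ▸ one_mem _)
  exact List.cons_ne_nil _ _ hnil

theorem not_injective_germ_of_centralizer_law {ι : Type*} {l : Filter ι} [l.NeBot] {ψ : A ≃* B}
    {Θ : HNNExtension G A B ψ →* Germ l G}
    (hΘ : ∀ x, Θ (HNNExtension.of x) = ((fun _ => x : ι → G) : Germ l G))
    {h a : G} (hA : h ∈ A) (hAh : A ≤ Subgroup.centralizer {h}) (hah : ¬ Commute a h)
    (law : ∀ f, Commute f h → Commute (f * a * f⁻¹) a) : ¬ Function.Injective Θ := by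
  intro hinj
  obtain ⟨g, hg⟩ := Quotient.exists_rep (Θ HNNExtension.t)
  replace hg : Θ HNNExtension.t = (g : Germ l G) := hg.symm
  have hgh : ∀ᶠ n in l, g n * h = ψ ⟨h, hA⟩ * g n := by
    have ht := congrArg Θ (HNNExtension.t_mul_of (φ := ψ) ⟨h, hA⟩)
    rw [map_mul, map_mul, hΘ, hΘ, hg] at ht
    exact Germ.coe_eq.1 ht
  obtain ⟨n₀, hn₀⟩ := hgh.exists
  set c := g n₀
  have hconj : c * h * c⁻¹ = ψ ⟨h, hA⟩ := mul_inv_eq_of_eq_mul hn₀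
  refine not_commute_conj_inv_mul_t ψ (a := a) (c := c) (fun haA => ?_) (fun hcB => ?_)
    (Commute.of_map hinj ?_)
  · exact hah (Subgroup.mem_centralizer_singleton_iff.1 (hAh haA))
  · obtain ⟨x, hx⟩ := ψ.surjective ⟨c * a * c⁻¹, hcB⟩
    have hxh : Commute x ⟨h, hA⟩ :=
      Subtype.ext (Subgroup.mem_centralizer_singleton_iff.1 (hAh x.2))
    have hcc : Commute (c * a * c⁻¹) (c * h * c⁻¹) := by
      rw [hconj]
      simpa [hx] using (hxh.map ψ).map B.subtype
    exact hah ((Commute.conj_iff c).1 hcc)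
  · simp only [map_mul, map_inv Θ, hΘ, hg]
    refine Germ.coe_eq.2 ?_
    filter_upwards [hgh] with n hn
    have hcomm : Commute (c⁻¹ * g n) h := (SemiconjBy.inv_symm_left hn₀).mul_left hn
    exact (law _ hcomm).eq

end HNNExtension

theorem stmt2_general {ι : Type*} {l : Filter ι} [l.NeBot] (g : ι → ThompsonF)
    (ev : ι → FreeGroup (Fin 3) →* ThompsonF)
    (hev : ∀ n, ev n = FreeGroup.lift
      (fun i : Fin 3 => if i = 0 then tx0 else if i = 1 then tx1 else g n))
    (N : Subgroup (FreeGroup (Fin 3))) [N.Normal] (hN : ∀ w, w ∈ N ↔ ∀ᶠ n in l, ev n w = 1)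
    {h : ThompsonF} (hh : h ≠ 1) {A B : Subgroup ThompsonF} (hA : h ∈ A)
    (hAh : A ≤ Subgroup.centralizer {h}) (ψ : A ≃* B) :
    ¬ ∃ φ : (FreeGroup (Fin 3) ⧸ N) ≃* HNNExtension ThompsonF A B ψ,
      φ (QuotientGroup.mk (FreeGroup.of 0)) = HNNExtension.of tx0 ∧
      φ (QuotientGroup.mk (FreeGroup.of 1)) = HNNExtension.of tx1 := by
  let E : FreeGroup (Fin 3) →* Germ l ThompsonF := (Germ.coeMulHom l).comp (MonoidHom.pi ev)
  obtain rfl : N = E.ker := Subgroup.ext fun w => (hN w).trans Germ.coe_eq.symm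
  rintro ⟨φ, hφ₀, hφ₁⟩
  obtain ⟨a, hah, law⟩ := exists_not_commute_and_forall_commute_conj hh
  let Θ : HNNExtension ThompsonF A B ψ →* Germ l ThompsonF :=
    (QuotientGroup.kerLift E).comp φ.symm.toMonoidHom
  have hE₀ : E (FreeGroup.of 0) = Germ.coeMulHom l (fun _ => tx0) :=
    congrArg (Germ.coeMulHom l) (funext fun n => by simp [hev])
  have hE₁ : E (FreeGroup.of 1) = Germ.coeMulHom l (fun _ => tx1) :=
    congrArg (Germ.coeMulHom l) (funext fun n => by simp [hev])
  have hΘ : Θ.comp HNNExtension.of = (Germ.coeMulHom l).comp (Pi.constMonoidHom ι ThompsonF) := by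
    refine PresentedGroup.ext fun i => ?_
    fin_cases i
    · exact (congrArg (QuotientGroup.kerLift E) (φ.symm_apply_eq.2 hφ₀.symm)).trans hE₀
    · exact (congrArg (QuotientGroup.kerLift E) (φ.symm_apply_eq.2 hφ₁.symm)).trans hE₁
  exact not_injective_germ_of_centralizer_law (Θ := Θ) (DFunLike.congr_fun hΘ) hA hAh hah law
    ((QuotientGroup.kerLift_injective E).comp φ.symm.injective)

/-- No limit of a convergent sequence of markings `(F, (x₀, x₁, g_n))` of Thompson's group
`F` is an HNN extension of `F` over cyclic subgroups `⟨h⟩ → ⟨h′⟩`, `h ↦ h′`, compatibly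
with the marking (the stable letter corresponding to the limit of the `g_n`). -/
theorem stmt2 (g : ℕ → ThompsonF)
    (ev : ℕ → FreeGroup (Fin 3) →* ThompsonF)
    (hev : ∀ n, ev n = FreeGroup.lift
      (fun i : Fin 3 => if i = 0 then tx0 else if i = 1 then tx1 else g n))
    (hconv : ∀ w : FreeGroup (Fin 3),
      (∀ᶠ n in Filter.atTop, ev n w = 1) ∨ (∀ᶠ n in Filter.atTop, ev n w ≠ 1))
    (N : Subgroup (FreeGroup (Fin 3))) [hN : N.Normal]
    (hNdef : ∀ w, w ∈ N ↔ ∀ᶠ n in Filter.atTop, ev n w = 1)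
    (h h' : ThompsonF) (hh : h ≠ 1) (hh' : h' ≠ 1)
    (ψ : (Subgroup.zpowers h) ≃* (Subgroup.zpowers h'))
    (hψ : ψ ⟨h, Subgroup.mem_zpowers h⟩ = ⟨h', Subgroup.mem_zpowers h'⟩) :
    ¬ ∃ φ : (FreeGroup (Fin 3) ⧸ N) ≃*
        HNNExtension ThompsonF (Subgroup.zpowers h) (Subgroup.zpowers h') ψ,
      φ (QuotientGroup.mk (FreeGroup.of 0)) = HNNExtension.of tx0 ∧
      φ (QuotientGroup.mk (FreeGroup.of 1)) = HNNExtension.of tx1 ∧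
      φ (QuotientGroup.mk (FreeGroup.of 2)) = HNNExtension.t := fun ⟨φ, hφ₀, hφ₁, _⟩ =>
  stmt2_general g ev hev N hNdef hh (Subgroup.mem_zpowers h)
    (Subgroup.zpowers_le.2 (Subgroup.mem_centralizer_singleton_iff.2 rfl)) ψ ⟨φ, hφ₀, hφ₁⟩
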